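/- arXiv:1901.01872 — 4 statements merged into one kernel-verified Lean document; each statement's English description precedes it below -/
import Mathlib

section
/- For every x ∈ ℝⁿ, the matrix D(x)^{−1/2} B D(x)^{−1/2} is symmetric positive semidefinite with all eigenvalues bounded above by ρ = 2(1−δ)/(2(1−δ)+αm) < 1; that is, 0 ⪯ D(x)^{−1/2} B D(x)^{−1/2} ⪯ ρ I. -/
open Matrix BigOperators

noncomputable section

/-- Second derivative of the `i`-th local objective. -/
def d2 {n : ℕ} (f : Fin n → ℝ → ℝ) (i : Fin n) (s : ℝ) : ℝ := deriv (deriv (f i)) s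

/-- Diagonal entries of the splitting matrix `D(x) = αG(x) + 2(I − W_d)`. -/
def dEntry {n : ℕ} (W : Matrix (Fin n) (Fin n) ℝ) (f : Fin n → ℝ → ℝ) (α : ℝ)
    (x : Fin n → ℝ) (i : Fin n) : ℝ :=
  α * d2 f i (x i) + 2 * (1 - W i i)

/-- `D(x)^{-1/2}`. -/
def Dinvhalf {n : ℕ} (W : Matrix (Fin n) (Fin n) ℝ) (f : Fin n → ℝ → ℝ) (α : ℝ)
    (x : Fin n → ℝ) : Matrix (Fin n) (Fin n) ℝ :=
  Matrix.diagonal (fun i => (Real.sqrt (dEntry W f α x i))⁻¹)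

/-- `B = I − 2W_d + W`. -/
def Bmat {n : ℕ} (W : Matrix (Fin n) (Fin n) ℝ) : Matrix (Fin n) (Fin n) ℝ :=
  1 - (2 : ℝ) • Matrix.diagonal (fun i => W i i) + W

/-!
Since `W` is symmetric, stochastic and nonnegative off the diagonal, `B = I − 2W_d + W` has diagonal
entries `1 − W_ii` and off-diagonal row sums `∑_{j ≠ i} W_ij = 1 − W_ii`: it is diagonally dominant,
hence positive semidefinite by Gershgorin's theorem. The matrix `ρD − B` has the same absolute
off-diagonal row sums, so it is diagonally dominant as soon as `2(1 − W_ii) ≤ ρ D_ii`, which follows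
from the monotonicity of `t ↦ t / (t + αm)` applied to `2(1 − W_ii) ≤ 2(1 − δ)`. Congruence by
`D^{-1/2}` transports `0 ⪯ B ⪯ ρD` to the claim.
-/

section DiagonalDominance

open scoped ComplexOrder

variable {ι : Type*} [Fintype ι] [DecidableEq ι]

theorem posSemidef_of_sum_row_norm_le_diag {𝕜 : Type*} [RCLike 𝕜] {A : Matrix ι ι 𝕜}
    (hA : A.IsHermitian) (hdom : ∀ i, ∑ j ∈ Finset.univ.erase i, ‖A i j‖ ≤ RCLike.re (A i i)) :
    A.PosSemidef := by
  refine hA.posSemidef_iff_eigenvalues_nonneg.mpr fun k => ?_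
  have hspec : (hA.eigenvalues k : 𝕜) ∈ spectrum 𝕜 (toLin' A) := by
    rw [spectrum_toLin', hA.spectrum_eq_image_range]
    exact Set.mem_image_of_mem _ (Set.mem_range_self k)
  obtain ⟨i, hi⟩ := eigenvalue_mem_ball (Module.End.HasEigenvalue.of_mem_spectrum hspec)
  have hre : RCLike.re (A i i) - hA.eigenvalues k ≤ RCLike.re (A i i) :=
    calc RCLike.re (A i i) - hA.eigenvalues k
        = RCLike.re (A i i - (hA.eigenvalues k : 𝕜)) := by rw [map_sub, RCLike.ofReal_re]
      _ ≤ ‖A i i - (hA.eigenvalues k : 𝕜)‖ := RCLike.re_le_norm _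
      _ ≤ ∑ j ∈ Finset.univ.erase i, ‖A i j‖ := mem_closedBall_iff_norm'.mp hi
      _ ≤ RCLike.re (A i i) := hdom i
  exact (sub_le_self_iff _).mp hre

theorem posSemidef_diagonal_sub_of_sum_row_norm_le_diag {B : Matrix ι ι ℝ} (hB : B.IsSymm)
    (hdom : ∀ i, ∑ j ∈ Finset.univ.erase i, ‖B i j‖ ≤ B i i) {e : ι → ℝ}
    (he : ∀ i, 2 * B i i ≤ e i) : (diagonal e - B).PosSemidef := by
  refine posSemidef_of_sum_row_norm_le_diag
    ((isHermitian_diagonal e).sub (isHermitian_iff_isSymm.mpr hB)) fun i => ?_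
  calc ∑ j ∈ Finset.univ.erase i, ‖(diagonal e - B) i j‖
      = ∑ j ∈ Finset.univ.erase i, ‖B i j‖ := Finset.sum_congr rfl fun j hj => by
        rw [Matrix.sub_apply, diagonal_apply_ne' _ (Finset.ne_of_mem_erase hj), zero_sub, norm_neg]
    _ ≤ B i i := hdom i
    _ ≤ e i - B i i := by linarith [he i]
    _ = RCLike.re ((diagonal e - B) i i) := by simp

theorem sum_erase_norm_eq_one_sub_diag {W : Matrix ι ι ℝ} (hWoff : ∀ i j, i ≠ j → 0 ≤ W i j)
    (hWone : W *ᵥ (fun _ => 1) = fun _ => 1) (i : ι) :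
    ∑ j ∈ Finset.univ.erase i, ‖W i j‖ = 1 - W i i := by
  have hrow : ∑ j, W i j = 1 := by simpa [mulVec, dotProduct] using congrFun hWone i
  calc ∑ j ∈ Finset.univ.erase i, ‖W i j‖
      = ∑ j ∈ Finset.univ.erase i, W i j := Finset.sum_congr rfl fun j hj =>
        Real.norm_of_nonneg (hWoff i j (Finset.ne_of_mem_erase hj).symm)
    _ = 1 - W i i := by rw [Finset.sum_erase_eq_sub (Finset.mem_univ i), hrow]

end DiagonalDominance

section SymmetricNormalization

variable {ι : Type*} [Fintype ι] [DecidableEq ι]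

/-- The symmetric normalization `D^{-1/2} B D^{-1/2}` of `B` by `D = diagonal d`. It has this
meaning for positive `d` only: a nonpositive `d i` zeroes the `i`-th row and column. -/
def symmNormalize (d : ι → ℝ) (B : Matrix ι ι ℝ) : Matrix ι ι ℝ :=
  diagonal (fun i => (√(d i))⁻¹) * B * diagonal (fun i => (√(d i))⁻¹)

theorem posSemidef_symmNormalize (d : ι → ℝ) {B : Matrix ι ι ℝ} (hB : B.PosSemidef) :
    (symmNormalize d B).PosSemidef := by
  simpa only [symmNormalize, (isHermitian_diagonal _).eq] using
    hB.mul_mul_conjTranspose_same (diagonal fun i => (√(d i))⁻¹)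

theorem symmNormalize_sub (d : ι → ℝ) (A B : Matrix ι ι ℝ) :
    symmNormalize d (A - B) = symmNormalize d A - symmNormalize d B := by
  simp only [symmNormalize, mul_sub, sub_mul]

theorem symmNormalize_diagonal_smul {d : ι → ℝ} (hd : ∀ i, 0 < d i) (c : ℝ) :
    symmNormalize d (diagonal (c • d)) = c • 1 := by
  rw [symmNormalize, diagonal_mul_diagonal, diagonal_mul_diagonal, smul_one_eq_diagonal]
  congr 1
  funext i
  have hsqrt : √(d i) ≠ 0 := (Real.sqrt_pos.mpr (hd i)).ne'
  rw [Pi.smul_apply, smul_eq_mul]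
  field_simp
  rw [Real.sq_sqrt (hd i).le, mul_comm]

theorem posSemidef_smul_one_sub_symmNormalize {d : ι → ℝ} (hd : ∀ i, 0 < d i) {c : ℝ}
    {B : Matrix ι ι ℝ} (hB : (diagonal (c • d) - B).PosSemidef) :
    (c • (1 : Matrix ι ι ℝ) - symmNormalize d B).PosSemidef := by
  rw [← symmNormalize_diagonal_smul hd, ← symmNormalize_sub]
  exact posSemidef_symmNormalize d hB

end SymmetricNormalization

theorem le_div_add_mul_add {a b m g : ℝ} (hb : 0 ≤ b) (hm : 0 < m) (hab : a ≤ b) (hmg : m ≤ g) :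
    a ≤ b / (b + m) * (g + a) := by
  have hcross : a * m ≤ b * g := mul_le_mul hab hmg hm.le hb
  rw [div_mul_eq_mul_div, le_div_iff₀ (by positivity)]
  linarith

theorem stmt0_general {ι : Type*} [Fintype ι] [DecidableEq ι] {W : Matrix ι ι ℝ}
    (hWsymm : W.IsSymm) (hWoff : ∀ i j, i ≠ j → 0 ≤ W i j)
    (hWone : W *ᵥ (fun _ => 1) = fun _ => 1)
    {δ : ℝ} (hδ : δ ≤ 1) (hWdiag : ∀ i, δ ≤ W i i)
    {m : ℝ} (hm : 0 < m) {ρ : ℝ} (hρ : ρ = 2 * (1 - δ) / (2 * (1 - δ) + m)) :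
    ρ < 1 ∧ ∀ g : ι → ℝ, (∀ i, m ≤ g i) →
      (symmNormalize (fun i => g i + 2 * (1 - W i i))
        (1 - (2 : ℝ) • diagonal (fun i => W i i) + W)).PosSemidef ∧
      (ρ • (1 : Matrix ι ι ℝ) - symmNormalize (fun i => g i + 2 * (1 - W i i))
        (1 - (2 : ℝ) • diagonal (fun i => W i i) + W)).PosSemidef := by
  subst hρ
  set B : Matrix ι ι ℝ := 1 - (2 : ℝ) • diagonal (fun i => W i i) + W with hBdef
  have hBsymm : B.IsSymm := by simp [IsSymm, hBdef, hWsymm.eq]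
  have hBdiag (i) : B i i = 1 - W i i := by
    simp only [hBdef, Matrix.add_apply, Matrix.sub_apply, Matrix.smul_apply, one_apply_eq,
      diagonal_apply_eq, smul_eq_mul]
    ring
  have hBoff (i j) (hij : i ≠ j) : B i j = W i j := by simp [hBdef, hij]
  have hWrow := sum_erase_norm_eq_one_sub_diag hWoff hWone
  have hWle (i) : 0 ≤ 1 - W i i := hWrow i ▸ Finset.sum_nonneg fun _ _ => norm_nonneg _
  have hBdom (i) : ∑ j ∈ Finset.univ.erase i, ‖B i j‖ ≤ B i i := by
    rw [hBdiag, ← hWrow]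
    exact (Finset.sum_congr rfl fun j hj => by rw [hBoff i j (Finset.ne_of_mem_erase hj).symm]).le
  have hb : 0 ≤ 2 * (1 - δ) := by linarith
  refine ⟨(div_lt_one (by positivity)).mpr (lt_add_of_pos_right _ hm), fun g hg => ⟨?_, ?_⟩⟩
  · exact posSemidef_symmNormalize _
      (posSemidef_of_sum_row_norm_le_diag (isHermitian_iff_isSymm.mpr hBsymm) hBdom)
  · refine posSemidef_smul_one_sub_symmNormalize (fun i => by linarith [hWle i, hg i])
      (posSemidef_diagonal_sub_of_sum_row_norm_le_diag hBsymm hBdom fun i => ?_)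
    rw [hBdiag]
    exact le_div_add_mul_add hb hm (by linarith [hWdiag i]) (hg i)

theorem stmt0 (n : ℕ) (hn : 1 ≤ n)
    (W : Matrix (Fin n) (Fin n) ℝ) (hWsymm : W.IsSymm)
    (hWnonneg : ∀ i j, 0 ≤ W i j) (hWlt : ∀ i j, W i j < 1)
    (hWone : W.mulVec (fun _ => 1) = fun _ => 1)
    (hWnull : ∀ x : Fin n → ℝ, ((1 - W).mulVec x = 0 ↔ ∃ c : ℝ, x = fun _ => c))
    (δ Δ : ℝ) (hδ : 0 < δ) (hδΔ : δ ≤ Δ) (hΔ : Δ < 1)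
    (hWdiag : ∀ i, δ ≤ W i i ∧ W i i ≤ Δ)
    (f : Fin n → ℝ → ℝ) (hf : ∀ i, ContDiff ℝ 2 (f i))
    (hconv : ∀ i, ConvexOn ℝ Set.univ (f i))
    (m M : ℝ) (hm : 0 < m) (hmM : m ≤ M)
    (hd2 : ∀ i s, m ≤ d2 f i s ∧ d2 f i s ≤ M)
    (α : ℝ) (hα : 0 < α)
    (ρ : ℝ) (hρ : ρ = 2 * (1 - δ) / (2 * (1 - δ) + α * m)) :
    ρ < 1 ∧
      ∀ x : Fin n → ℝ,
        (Dinvhalf W f α x * Bmat W * Dinvhalf W f α x).PosSemidef ∧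
        (ρ • (1 : Matrix (Fin n) (Fin n) ℝ)
            - Dinvhalf W f α x * Bmat W * Dinvhalf W f α x).PosSemidef := by
  obtain ⟨hρ1, hpsd⟩ := stmt0_general hWsymm (fun i j _ => hWnonneg i j) hWone
    (hδΔ.trans hΔ.le) (fun i => (hWdiag i).1) (mul_pos hα hm) hρ
  exact ⟨hρ1, fun x => hpsd _ fun i => mul_le_mul_of_nonneg_left (hd2 i (x i)).1 hα.le⟩
end
end

section
/- For every x ∈ ℝⁿ, the Hessian H(x) is invertible and its inverse is given by the convergent Neumann series H(x)^{−1} = D(x)^{−1/2} (Σ_{k=0}^∞ (D(x)^{−1/2} B D(x)^{−1/2})^k) D(x)^{−1/2}, where the series converges in the matrix operator norm. -/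
open Matrix BigOperators

noncomputable section

/-- The diagonal matrix `G(x)` with `G(x)_ii = f_i''(x_i)`. -/
def Gmat {n : ℕ} (f : Fin n → ℝ → ℝ) (x : Fin n → ℝ) : Matrix (Fin n) (Fin n) ℝ :=
  Matrix.diagonal (fun i => d2 f i (x i))

/-- The Hessian `H(x) = I − W + αG(x)` of the penalized objective. -/
def Hmat {n : ℕ} (W : Matrix (Fin n) (Fin n) ℝ) (f : Fin n → ℝ → ℝ) (α : ℝ)
    (x : Fin n → ℝ) : Matrix (Fin n) (Fin n) ℝ :=
  1 - W + α • Gmat f x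

/-- `D(x) = αG(x) + 2(I − W_d)`. -/
def Dmat {n : ℕ} (W : Matrix (Fin n) (Fin n) ℝ) (f : Fin n → ℝ → ℝ) (α : ℝ)
    (x : Fin n → ℝ) : Matrix (Fin n) (Fin n) ℝ :=
  Matrix.diagonal (dEntry W f α x)

/-- `D(x)^{1/2}`. -/
def Dhalf {n : ℕ} (W : Matrix (Fin n) (Fin n) ℝ) (f : Fin n → ℝ → ℝ) (α : ℝ)
    (x : Fin n → ℝ) : Matrix (Fin n) (Fin n) ℝ :=
  Matrix.diagonal (fun i => Real.sqrt (dEntry W f α x i))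

/-- The approximate Hessian inverse
`Ĥ(x)⁻¹ = D(x)^{-1/2}(I + D(x)^{-1/2} B D(x)^{-1/2}) D(x)^{-1/2}`. -/
def Hhatinv {n : ℕ} (W : Matrix (Fin n) (Fin n) ℝ) (f : Fin n → ℝ → ℝ) (α : ℝ)
    (x : Fin n → ℝ) : Matrix (Fin n) (Fin n) ℝ :=
  Dinvhalf W f α x * (1 + Dinvhalf W f α x * Bmat W * Dinvhalf W f α x) * Dinvhalf W f α x

/-- The penalized objective `F(x) = (1/2) xᵀ(I−W)x + α Σᵢ f_i(x_i)`. -/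
def Fobj {n : ℕ} (W : Matrix (Fin n) (Fin n) ℝ) (f : Fin n → ℝ → ℝ) (α : ℝ)
    (x : Fin n → ℝ) : ℝ :=
  (1 / 2) * (x ⬝ᵥ ((1 - W).mulVec x)) + α * ∑ i, f i (x i)

/-- The gradient `g(x) = (I − W)x + α (f_i'(x_i))_i` of the penalized objective. -/
def gvec {n : ℕ} (W : Matrix (Fin n) (Fin n) ℝ) (f : Fin n → ℝ → ℝ) (α : ℝ)
    (x : Fin n → ℝ) : Fin n → ℝ :=
  fun i => ((1 - W).mulVec x) i + α * deriv (f i) (x i)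

/-- The asynchronous update `x^(i)`: agent `i` moves along the approximate Newton
direction with stepsize `ε / p i`; other coordinates are unchanged. -/
def upd {n : ℕ} (W : Matrix (Fin n) (Fin n) ℝ) (f : Fin n → ℝ → ℝ) (α : ℝ)
    (p : Fin n → ℝ) (ε : ℝ) (x : Fin n → ℝ) (i : Fin n) : Fin n → ℝ :=
  Function.update x i (x i - (ε / p i) * ((Hhatinv W f α x).mulVec (gvec W f α x)) i)

/-- Euclidean norm on `ℝⁿ`. -/
def enorm {n : ℕ} (v : Fin n → ℝ) : ℝ := Real.sqrt (∑ i, v i ^ 2)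

open scoped Matrix.Norms.L2Operator

/-! The matrix `D^{-1/2} B D^{-1/2}` is similar, through `D^{1/2}`, to the Jacobi iteration matrix
`D⁻¹ B`, and if the absolute row sums of `B` lie below the diagonal of `D`, then `D⁻¹ B` has `ℓ^∞`
operator norm less than `1`. All norms on a finite-dimensional space being equivalent, the powers of
`D^{-1/2} B D^{-1/2}` are summable in every operator norm, and the factorization
`D - B = D^{1/2} (1 - D^{-1/2} B D^{-1/2}) D^{1/2}` gives the inverse. For the Hessian, the row sums
of `B ≥ 0` are `2 (1 - W i i)`, and `D` exceeds them by the curvature term `α G(x)`. -/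

section TopologicalRing

variable {R : Type*}

section Semiring

variable [Semiring R] [TopologicalSpace R] [IsTopologicalSemiring R]

theorem summable_pow_units_conj (u : Rˣ) {a : R} (ha : Summable (fun k : ℕ => a ^ k)) :
    Summable (fun k : ℕ => (↑u * a * ↑u⁻¹) ^ k) := by
  simpa only [Units.conj_pow] using (ha.mul_left (u : R)).mul_right (↑u⁻¹ : R)

theorem summable_pow_units_inv_mul_mul_inv (u : Rˣ) {b : R}
    (hb : Summable (fun k : ℕ => (↑u⁻¹ * ↑u⁻¹ * b) ^ k)) :
    Summable (fun k : ℕ => (↑u⁻¹ * b * ↑u⁻¹) ^ k) := by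
  simpa only [mul_assoc, Units.mul_inv_cancel_left] using summable_pow_units_conj u hb

end Semiring

variable [Ring R]

theorem units_mul_self_sub_eq (u : Rˣ) (b : R) :
    ↑u * ↑u - b = ↑u * (1 - ↑u⁻¹ * b * ↑u⁻¹) * ↑u := by
  simp only [mul_sub, sub_mul, mul_one, mul_assoc, Units.inv_mul, Units.mul_inv_cancel_left]

theorem units_mul_self_sub_mul_tsum_eq_one [TopologicalSpace R] [IsTopologicalRing R] [T2Space R]
    (u : Rˣ) {b : R} (hb : Summable (fun k : ℕ => (↑u⁻¹ * b * ↑u⁻¹) ^ k)) :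
    (↑u * ↑u - b) * (↑u⁻¹ * (∑' k : ℕ, (↑u⁻¹ * b * ↑u⁻¹) ^ k) * ↑u⁻¹) = 1 := by
  set a : R := ↑u⁻¹ * b * ↑u⁻¹ with ha
  calc (↑u * ↑u - b) * (↑u⁻¹ * (∑' k : ℕ, a ^ k) * ↑u⁻¹)
      = ↑u * ((1 - a) * ∑' k : ℕ, a ^ k) * ↑u⁻¹ := by
        simp only [units_mul_self_sub_eq u b, ← ha, mul_assoc, Units.mul_inv_cancel_left]
    _ = 1 := by rw [hb.one_sub_mul_tsum_pow, mul_one, Units.mul_inv]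

end TopologicalRing

section DiagonallyDominant

variable {ι : Type*} [Fintype ι] [DecidableEq ι]

theorem summable_matrix_pow_of_sum_norm_row_lt_one {R : Type*} [NormedRing R] [CompleteSpace R]
    {A : Matrix ι ι R} (hA : ∀ i, ∑ j, ‖A i j‖ < 1) : Summable (fun k : ℕ => A ^ k) := by
  let _ : NormedRing (Matrix ι ι R) := Matrix.linftyOpNormedRing
  have hnorm : ‖A‖ < 1 := by
    rw [linfty_opNorm_def, ← NNReal.coe_one, NNReal.coe_lt_coe, Finset.sup_lt_iff zero_lt_one]
    exact fun i _ => by simpa [← NNReal.coe_lt_coe] using hA i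
  -- The metric uniformity is the product uniformity only after unfolding, so it is named here.
  have : @CompleteSpace (Matrix ι ι R) PseudoMetricSpace.toUniformSpace :=
    inferInstanceAs (CompleteSpace (ι → ι → R))
  exact summable_geometric_of_norm_lt_one hnorm

/-- The square root `D^{1/2}` of the diagonal matrix `D` with positive diagonal `d`, as a unit of
the matrix ring, so that `D^{-1/2}` is its inverse in the sense of units. -/
def sqrtDiagonal (d : ι → ℝ) (hd : ∀ i, 0 < d i) : (Matrix ι ι ℝ)ˣ where
  val := diagonal fun i => √(d i)
  inv := diagonal fun i => (√(d i))⁻¹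
  val_inv := by
    simp only [diagonal_mul_diagonal, mul_inv_cancel₀ (Real.sqrt_pos.2 (hd _)).ne', diagonal_one]
  inv_val := by
    simp only [diagonal_mul_diagonal, inv_mul_cancel₀ (Real.sqrt_pos.2 (hd _)).ne', diagonal_one]

theorem coe_inv_sqrtDiagonal (d : ι → ℝ) (hd : ∀ i, 0 < d i) :
    (sqrtDiagonal d hd)⁻¹.val = diagonal fun i => (√(d i))⁻¹ :=
  rfl

theorem sqrtDiagonal_mul_self (d : ι → ℝ) (hd : ∀ i, 0 < d i) :
    (sqrtDiagonal d hd).val * (sqrtDiagonal d hd).val = diagonal d := by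
  simp only [sqrtDiagonal, diagonal_mul_diagonal, Real.mul_self_sqrt (hd _).le]

theorem inv_sqrtDiagonal_mul_self (d : ι → ℝ) (hd : ∀ i, 0 < d i) :
    (sqrtDiagonal d hd)⁻¹.val * (sqrtDiagonal d hd)⁻¹.val = diagonal fun i => (d i)⁻¹ := by
  simp only [coe_inv_sqrtDiagonal, diagonal_mul_diagonal, ← mul_inv, Real.mul_self_sqrt (hd _).le]

theorem summable_pow_diagonal_inv_mul {K : Type*} [NormedField K] [CompleteSpace K] {d : ι → K}
    {B : Matrix ι ι K} (h : ∀ i, ∑ j, ‖B i j‖ < ‖d i‖) :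
    Summable (fun k : ℕ => (diagonal (fun i => (d i)⁻¹) * B) ^ k) := by
  refine summable_matrix_pow_of_sum_norm_row_lt_one fun i => ?_
  have hd : 0 < ‖d i‖ := (Finset.sum_nonneg fun j _ => norm_nonneg (B i j)).trans_lt (h i)
  simpa only [diagonal_mul, norm_mul, norm_inv, ← Finset.mul_sum, inv_mul_lt_one₀ hd] using h i

theorem stmt1_general {d : ι → ℝ} {B : Matrix ι ι ℝ} (h : ∀ i, ∑ j, |B i j| < d i) :
    IsUnit (diagonal d - B) ∧
      ∃ T : Matrix ι ι ℝ,
        HasSum (fun k : ℕ => (diagonal (fun i => (√(d i))⁻¹) * B *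
          diagonal (fun i => (√(d i))⁻¹)) ^ k) T ∧
        (diagonal d - B)⁻¹ =
          diagonal (fun i => (√(d i))⁻¹) * T * diagonal (fun i => (√(d i))⁻¹) := by
  have hd (i : ι) : 0 < d i := (Finset.sum_nonneg fun j _ => abs_nonneg (B i j)).trans_lt (h i)
  have hJacobi : Summable (fun k : ℕ => (diagonal (fun i => (d i)⁻¹) * B) ^ k) :=
    summable_pow_diagonal_inv_mul fun i => (h i).trans_le (le_abs_self (d i))
  rw [← inv_sqrtDiagonal_mul_self d hd] at hJacobi
  have hsum := summable_pow_units_inv_mul_mul_inv _ hJacobi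
  have hinv := units_mul_self_sub_mul_tsum_eq_one _ hsum
  rw [sqrtDiagonal_mul_self] at hinv
  exact ⟨.of_mul_eq_one _ hinv, _, hsum.hasSum, inv_eq_right_inv hinv⟩

end DiagonallyDominant

section Hessian

variable {n : ℕ} (W : Matrix (Fin n) (Fin n) ℝ)

theorem Bmat_apply_self (i : Fin n) : Bmat W i i = 1 - W i i := by
  simp only [Bmat, Matrix.add_apply, Matrix.sub_apply, Matrix.smul_apply, one_apply_eq,
    diagonal_apply_eq, smul_eq_mul]
  ring

theorem Bmat_apply_ne {i j : Fin n} (hij : i ≠ j) : Bmat W i j = W i j := by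
  simp [Bmat, hij]

theorem Hmat_eq_Dmat_sub_Bmat (f : Fin n → ℝ → ℝ) (α : ℝ) (x : Fin n → ℝ) :
    Hmat W f α x = Dmat W f α x - Bmat W := by
  ext i j
  obtain rfl | hij := eq_or_ne i j
  · simp only [Hmat, Gmat, Dmat, dEntry, Bmat_apply_self, Matrix.add_apply, Matrix.sub_apply,
      Matrix.smul_apply, one_apply_eq, diagonal_apply_eq, smul_eq_mul]
    ring
  · simp [Hmat, Gmat, Dmat, Bmat_apply_ne W hij, hij]

variable {W}

theorem Bmat_nonneg (hW : W ∈ rowStochastic ℝ (Fin n)) (i j : Fin n) : 0 ≤ Bmat W i j := by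
  obtain rfl | hij := eq_or_ne i j
  · rw [Bmat_apply_self]
    exact sub_nonneg.2 (le_one_of_mem_rowStochastic hW)
  · rw [Bmat_apply_ne W hij]
    exact nonneg_of_mem_rowStochastic hW

theorem sum_row_Bmat (hW : W ∈ rowStochastic ℝ (Fin n)) (i : Fin n) :
    ∑ j, Bmat W i j = 2 * (1 - W i i) := by
  simp only [Bmat, Matrix.add_apply, Matrix.sub_apply, Matrix.smul_apply, one_apply,
    diagonal_apply, smul_eq_mul, mul_ite, mul_zero, Finset.sum_add_distrib,
    Finset.sum_sub_distrib, Finset.sum_ite_eq, Finset.mem_univ, if_true,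
    sum_row_of_mem_rowStochastic hW]
  ring

theorem sum_abs_Bmat_lt_dEntry (hW : W ∈ rowStochastic ℝ (Fin n)) {f : Fin n → ℝ → ℝ} {α : ℝ}
    {x : Fin n → ℝ} {i : Fin n} (hαf : 0 < α * d2 f i (x i)) :
    ∑ j, |Bmat W i j| < dEntry W f α x i := by
  simpa only [abs_of_nonneg (Bmat_nonneg hW i _), sum_row_Bmat hW, dEntry, lt_add_iff_pos_left]
    using hαf

end Hessian

/-- The Hessian is invertible and its inverse is given by the Neumann series
`H(x)⁻¹ = D(x)^{-1/2} (Σ_k (D(x)^{-1/2} B D(x)^{-1/2})^k) D(x)^{-1/2}`, the series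
converging in the l2 (spectral) operator norm on matrices. -/
theorem stmt1 (n : ℕ) (hn : 1 ≤ n)
    (W : Matrix (Fin n) (Fin n) ℝ) (hWsymm : W.IsSymm)
    (hWnonneg : ∀ i j, 0 ≤ W i j) (hWlt : ∀ i j, W i j < 1)
    (hWone : W.mulVec (fun _ => 1) = fun _ => 1)
    (hWnull : ∀ x : Fin n → ℝ, ((1 - W).mulVec x = 0 ↔ ∃ c : ℝ, x = fun _ => c))
    (δ Δ : ℝ) (hδ : 0 < δ) (hδΔ : δ ≤ Δ) (hΔ : Δ < 1)
    (hWdiag : ∀ i, δ ≤ W i i ∧ W i i ≤ Δ)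
    (f : Fin n → ℝ → ℝ) (hf : ∀ i, ContDiff ℝ 2 (f i))
    (hconv : ∀ i, ConvexOn ℝ Set.univ (f i))
    (m M : ℝ) (hm : 0 < m) (hmM : m ≤ M)
    (hd2 : ∀ i s, m ≤ d2 f i s ∧ d2 f i s ≤ M)
    (α : ℝ) (hα : 0 < α)
    : ∀ x : Fin n → ℝ,
      IsUnit (Hmat W f α x) ∧
      ∃ T : Matrix (Fin n) (Fin n) ℝ,
        HasSum (fun k : ℕ => (Dinvhalf W f α x * Bmat W * Dinvhalf W f α x) ^ k) T ∧
        (Hmat W f α x)⁻¹ = Dinvhalf W f α x * T * Dinvhalf W f α x := by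
  intro x
  rw [Hmat_eq_Dmat_sub_Bmat]
  exact stmt1_general fun i =>
    sum_abs_Bmat_lt_dEntry ⟨hWnonneg, hWone⟩ (mul_pos hα (hm.trans_le (hd2 i (x i)).1))
end
end

section
/- For every x ∈ ℝⁿ the following eigenvalue bounds hold: αm I ⪯ H(x) ⪯ (2(1−δ)+αM) I; (2(1−Δ)+αm) I ⪯ D(x) ⪯ (2(1−δ)+αM) I; and 0 ⪯ B ⪯ 2(1−δ) I. -/
open Matrix BigOperators

noncomputable section

/-!
Gershgorin's theorem sandwiches `W` in the Löwner order: the off-diagonal part of row `i` has total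
weight at most `1 - W i i`, so `2 W_d - I ⪯ W ⪯ I`. Since `m I ⪯ G ⪯ M I` and `δ I ⪯ W_d ⪯ Δ I`, all
six bounds follow by substituting these inequalities into the linear expressions `H`, `D` and `B`.
-/

section Gershgorin

open Finset
open scoped ComplexOrder MatrixOrder

variable {𝕜 ι : Type*} [RCLike 𝕜] [Fintype ι] [DecidableEq ι] {A : Matrix ι ι 𝕜} {c : ι → ℝ}

theorem hasEigenvalue_toLin'_eigenvalues (hA : A.IsHermitian) (i : ι) :
    Module.End.HasEigenvalue (toLin' A) (hA.eigenvalues i : 𝕜) := by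
  rw [Module.End.hasEigenvalue_iff_mem_spectrum, spectrum_toLin', hA.spectrum_eq_image_range]
  exact Set.mem_image_of_mem _ (Set.mem_range_self i)

theorem posSemidef_of_sum_norm_offDiag_le_diag (hA : A.IsHermitian)
    (hdom : ∀ i, ∑ j ∈ univ.erase i, ‖A i j‖ ≤ RCLike.re (A i i)) : A.PosSemidef := by
  refine hA.posSemidef_iff_eigenvalues_nonneg.2 fun i => ?_
  obtain ⟨k, hk⟩ := eigenvalue_mem_ball (hasEigenvalue_toLin'_eigenvalues hA i)
  have hle : RCLike.re (A k k) - hA.eigenvalues i ≤ RCLike.re (A k k) :=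
    calc RCLike.re (A k k) - hA.eigenvalues i
        = RCLike.re (A k k - (hA.eigenvalues i : 𝕜)) := by rw [map_sub, RCLike.ofReal_re]
      _ ≤ ‖A k k - (hA.eigenvalues i : 𝕜)‖ := RCLike.re_le_norm _
      _ ≤ ∑ j ∈ univ.erase k, ‖A k j‖ := mem_closedBall_iff_norm'.1 hk
      _ ≤ RCLike.re (A k k) := hdom k
  exact (sub_le_self_iff _).1 hle

theorem diagonal_le_of_add_sum_norm_offDiag_le (hA : A.IsHermitian)
    (h : ∀ i, c i + ∑ j ∈ univ.erase i, ‖A i j‖ ≤ RCLike.re (A i i)) :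
    diagonal (fun i => (c i : 𝕜)) ≤ A := by
  have hdiag : (diagonal fun i => (c i : 𝕜)).IsHermitian :=
    isHermitian_diagonal_of_self_adjoint _ <| funext fun _ => RCLike.conj_ofReal _
  refine posSemidef_of_sum_norm_offDiag_le_diag (hA.sub hdiag) fun i => ?_
  have hoff : ∀ j ∈ univ.erase i, ‖(A - diagonal fun i => (c i : 𝕜)) i j‖ = ‖A i j‖ :=
    fun j hj => by rw [Matrix.sub_apply, diagonal_apply_ne' _ (ne_of_mem_erase hj), sub_zero]
  rw [sum_congr rfl hoff, Matrix.sub_apply, diagonal_apply_eq, map_sub, RCLike.ofReal_re]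
  exact le_sub_iff_add_le'.2 (h i)

theorem le_diagonal_of_add_sum_norm_offDiag_le (hA : A.IsHermitian)
    (h : ∀ i, RCLike.re (A i i) + ∑ j ∈ univ.erase i, ‖A i j‖ ≤ c i) :
    A ≤ diagonal fun i => (c i : 𝕜) := by
  have hneg : diagonal (fun i => ((-c i : ℝ) : 𝕜)) ≤ -A := by
    refine diagonal_le_of_add_sum_norm_offDiag_le hA.neg fun i => ?_
    simp only [Matrix.neg_apply, norm_neg, map_neg]
    linarith [h i]
  refine neg_le_neg_iff.1 ?_
  simpa only [RCLike.ofReal_neg, diagonal_neg] using hneg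

theorem diagonal_mem_Icc_smul_one {κ : Type*} [DecidableEq κ] {d : κ → 𝕜} {a b : 𝕜}
    (hd : ∀ i, d i ∈ Set.Icc a b) : diagonal d ∈ Set.Icc (a • 1) (b • 1) := by
  simp only [smul_one_eq_diagonal, Set.mem_Icc, Matrix.le_iff, diagonal_sub,
    posSemidef_diagonal_iff, sub_nonneg]
  exact ⟨fun i => (hd i).1, fun i => (hd i).2⟩

end Gershgorin

section Stochastic

open Finset
open scoped MatrixOrder

variable {ι : Type*} [Fintype ι] [DecidableEq ι]

theorem sum_abs_offDiag_of_mem_rowStochastic {R : Type*} [Ring R] [LinearOrder R]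
    [IsOrderedRing R] {W : Matrix ι ι R} (hW : W ∈ rowStochastic R ι) (i : ι) :
    ∑ j ∈ univ.erase i, |W i j| = 1 - W i i := by
  rw [sum_congr rfl fun j _ => abs_of_nonneg (nonneg_of_mem_rowStochastic hW),
    sum_erase_eq_sub (mem_univ i), sum_row_of_mem_rowStochastic hW]

theorem mem_Icc_two_smul_diagonal_sub_one {W : Matrix ι ι ℝ} (hW : W.IsSymm)
    (hoff : ∀ i, ∑ j ∈ univ.erase i, |W i j| ≤ 1 - W i i) :
    W ∈ Set.Icc ((2 : ℝ) • diagonal W.diag - 1) 1 := by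
  have hherm : W.IsHermitian := isHermitian_iff_isSymm.2 hW
  have hlower : diagonal (fun i => 2 * W i i - 1) ≤ W :=
    diagonal_le_of_add_sum_norm_offDiag_le hherm fun i => by
      change 2 * W i i - 1 + ∑ j ∈ univ.erase i, |W i j| ≤ W i i
      linarith [hoff i]
  have hupper : W ≤ diagonal fun _ => 1 :=
    le_diagonal_of_add_sum_norm_offDiag_le hherm fun i => le_sub_iff_add_le'.1 (hoff i)
  rw [← diagonal_one, ← diagonal_smul, diagonal_sub]
  exact ⟨hlower, hupper⟩

end Stochastic

section OrderedModule

variable {R E : Type*} [CommRing R] [PartialOrder R] [IsOrderedRing R] [AddCommGroup E]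
  [PartialOrder E] [IsOrderedAddMonoid E] [Module R E] [IsOrderedModule R E]
  {e w d g : E} {α δ Δ m M : R}

theorem sub_add_smul_mem_Icc (hw : w ∈ Set.Icc ((2 : R) • d - e) e) (hd : δ • e ≤ d)
    (hg : g ∈ Set.Icc (m • e) (M • e)) (hα : 0 ≤ α) :
    e - w + α • g ∈ Set.Icc ((α * m) • e) ((2 * (1 - δ) + α * M) • e) := by
  obtain ⟨hdw, hwe⟩ := hw
  obtain ⟨hmg, hgM⟩ := hg
  have htwo : (0 : R) ≤ 2 := zero_le_two
  constructor
  · calc (α * m) • e = e - e + α • m • e := by module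
      _ ≤ e - w + α • g := by gcongr
  · calc e - w + α • g ≤ e - ((2 : R) • d - e) + α • g := by gcongr
      _ ≤ e - ((2 : R) • δ • e - e) + α • M • e := by gcongr
      _ = (2 * (1 - δ) + α * M) • e := by module

theorem smul_add_two_smul_sub_mem_Icc (hd : d ∈ Set.Icc (δ • e) (Δ • e))
    (hg : g ∈ Set.Icc (m • e) (M • e)) (hα : 0 ≤ α) :
    α • g + (2 : R) • (e - d) ∈
      Set.Icc ((2 * (1 - Δ) + α * m) • e) ((2 * (1 - δ) + α * M) • e) := by
  obtain ⟨hδd, hdΔ⟩ := hd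
  obtain ⟨hmg, hgM⟩ := hg
  have htwo : (0 : R) ≤ 2 := zero_le_two
  constructor
  · calc (2 * (1 - Δ) + α * m) • e = α • m • e + (2 : R) • (e - Δ • e) := by module
      _ ≤ α • g + (2 : R) • (e - d) := by gcongr
  · calc α • g + (2 : R) • (e - d) ≤ α • M • e + (2 : R) • (e - δ • e) := by gcongr
      _ = (2 * (1 - δ) + α * M) • e := by module

theorem sub_two_smul_add_mem_Icc (hw : w ∈ Set.Icc ((2 : R) • d - e) e) (hd : δ • e ≤ d) :
    e - (2 : R) • d + w ∈ Set.Icc 0 ((2 * (1 - δ)) • e) := by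
  obtain ⟨hdw, hwe⟩ := hw
  have htwo : (0 : R) ≤ 2 := zero_le_two
  constructor
  · calc (0 : E) = e - (2 : R) • d + ((2 : R) • d - e) := by module
      _ ≤ e - (2 : R) • d + w := by gcongr
  · calc e - (2 : R) • d + w ≤ e - (2 : R) • δ • e + e := by gcongr
      _ = (2 * (1 - δ)) • e := by module

end OrderedModule

theorem Dmat_eq {n : ℕ} (W : Matrix (Fin n) (Fin n) ℝ) (f : Fin n → ℝ → ℝ) (α : ℝ)
    (x : Fin n → ℝ) : Dmat W f α x = α • Gmat f x + (2 : ℝ) • (1 - diagonal W.diag) := by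
  rw [Gmat, ← diagonal_one, diagonal_sub, ← diagonal_smul, ← diagonal_smul, diagonal_add]
  rfl

open scoped MatrixOrder in
theorem stmt3_general {ι : Type*} [Fintype ι] [DecidableEq ι] {W : Matrix ι ι ℝ}
    (hW : W.IsSymm) (hoff : ∀ i, ∑ j ∈ Finset.univ.erase i, |W i j| ≤ 1 - W i i)
    {δ Δ : ℝ} (hdiag : ∀ i, W i i ∈ Set.Icc δ Δ)
    {g : ι → ℝ} {m M : ℝ} (hg : ∀ i, g i ∈ Set.Icc m M) {α : ℝ} (hα : 0 ≤ α) :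
    1 - W + α • diagonal g ∈ Set.Icc ((α * m) • 1) ((2 * (1 - δ) + α * M) • 1) ∧
    α • diagonal g + (2 : ℝ) • (1 - diagonal W.diag) ∈
      Set.Icc ((2 * (1 - Δ) + α * m) • 1) ((2 * (1 - δ) + α * M) • 1) ∧
    1 - (2 : ℝ) • diagonal W.diag + W ∈ Set.Icc 0 ((2 * (1 - δ)) • 1) :=
  have hWIcc := mem_Icc_two_smul_diagonal_sub_one hW hoff
  have hWd : diagonal W.diag ∈ Set.Icc (δ • 1) (Δ • 1) := diagonal_mem_Icc_smul_one hdiag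
  have hG : diagonal g ∈ Set.Icc (m • 1) (M • 1) := diagonal_mem_Icc_smul_one hg
  ⟨sub_add_smul_mem_Icc hWIcc hWd.1 hG hα, smul_add_two_smul_sub_mem_Icc hWd hG hα,
    sub_two_smul_add_mem_Icc hWIcc hWd.1⟩

/-- Eigenvalue bounds: `αm I ⪯ H(x) ⪯ (2(1−δ)+αM) I`,
`(2(1−Δ)+αm) I ⪯ D(x) ⪯ (2(1−δ)+αM) I`, and `0 ⪯ B ⪯ 2(1−δ) I`. -/
theorem stmt3 (n : ℕ) (hn : 1 ≤ n)
    (W : Matrix (Fin n) (Fin n) ℝ) (hWsymm : W.IsSymm)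
    (hWnonneg : ∀ i j, 0 ≤ W i j) (hWlt : ∀ i j, W i j < 1)
    (hWone : W.mulVec (fun _ => 1) = fun _ => 1)
    (hWnull : ∀ x : Fin n → ℝ, ((1 - W).mulVec x = 0 ↔ ∃ c : ℝ, x = fun _ => c))
    (δ Δ : ℝ) (hδ : 0 < δ) (hδΔ : δ ≤ Δ) (hΔ : Δ < 1)
    (hWdiag : ∀ i, δ ≤ W i i ∧ W i i ≤ Δ)
    (f : Fin n → ℝ → ℝ) (hf : ∀ i, ContDiff ℝ 2 (f i))
    (hconv : ∀ i, ConvexOn ℝ Set.univ (f i))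
    (m M : ℝ) (hm : 0 < m) (hmM : m ≤ M)
    (hd2 : ∀ i s, m ≤ d2 f i s ∧ d2 f i s ≤ M)
    (α : ℝ) (hα : 0 < α)
    : ∀ x : Fin n → ℝ,
      (Hmat W f α x - (α * m) • (1 : Matrix (Fin n) (Fin n) ℝ)).PosSemidef ∧
      ((2 * (1 - δ) + α * M) • (1 : Matrix (Fin n) (Fin n) ℝ) - Hmat W f α x).PosSemidef ∧
      (Dmat W f α x - (2 * (1 - Δ) + α * m) • (1 : Matrix (Fin n) (Fin n) ℝ)).PosSemidef ∧
      ((2 * (1 - δ) + α * M) • (1 : Matrix (Fin n) (Fin n) ℝ) - Dmat W f α x).PosSemidef ∧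
      (Bmat W).PosSemidef ∧
      ((2 * (1 - δ)) • (1 : Matrix (Fin n) (Fin n) ℝ) - Bmat W).PosSemidef := by
  intro x
  rw [Dmat_eq]
  have hW : W ∈ rowStochastic ℝ (Fin n) := ⟨hWnonneg, hWone⟩
  obtain ⟨hH, hD, hB⟩ := stmt3_general hWsymm
    (fun i => (sum_abs_offDiag_of_mem_rowStochastic hW i).le) hWdiag (fun i => hd2 i (x i)) hα.le
  exact ⟨hH.1, hH.2, hD.1, hD.2, nonneg_iff_posSemidef.1 hB.1, hB.2⟩
end
end

section
/- If the stepsize parameter satisfies 0 < ε ≤ 2π(λ/Λ)², then the sequence of function values F(x(t)) generated by the asynchronous network Newton process converges almost surely to the optimal value F*. -/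
open Matrix BigOperators

noncomputable section

/-!
One expected step contracts the gap `F - F*` by a fixed factor `q < 1`. Along each coordinate the
second derivative of `F` is at most `L = 1 - δ + αM`, so averaging the updates over `i ∼ p`
yields at most `F - ε gᵀĤ⁻¹g + ε² L / (2π) |Ĥ⁻¹g|²`. Writing the quadratic forms of `I - W` and
`I + W` as sums of squares gives `0 ⪯ B ⪯ 2(I - W_d)`, hence `λI ⪯ Ĥ⁻¹ ⪯ ΛI` and
`|Ĥ⁻¹g|² ≤ Λ gᵀĤ⁻¹g`. As soon as `ε L Λ < 2π`, the expected decrease is therefore a positive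
multiple of `gᵀĤ⁻¹g ≥ λ|g|²`, and strong convexity gives `|g|² ≥ 2αm (F - F*)`. Since `Lλ < 1` and
`λ ≤ Λ`, every `ε ≤ 2π(λ/Λ)²` is such a stepsize.

Since `I (t + 1)` is independent of `X t`, the expected gaps decay geometrically and are therefore
summable. The sum of the gaps has finite expectation, so it is almost surely finite and its terms
tend to zero.
-/

section Lintegral

open MeasureTheory Filter Topology

variable {Ω : Type*} [MeasurableSpace Ω] {μ : Measure Ω}

lemma ae_tendsto_zero_of_lintegral_succ_le_mul {φ : ℕ → Ω → ENNReal} {q : ENNReal}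
    (hφ : ∀ t, Measurable (φ t)) (hq : q < 1) (hφ0 : ∫⁻ ω, φ 0 ω ∂μ ≠ ⊤)
    (hstep : ∀ t, ∫⁻ ω, φ (t + 1) ω ∂μ ≤ q * ∫⁻ ω, φ t ω ∂μ) :
    ∀ᵐ ω ∂μ, Tendsto (fun t => φ t ω) atTop (𝓝 0) := by
  have hgeom : ∀ t, ∫⁻ ω, φ t ω ∂μ ≤ q ^ t * ∫⁻ ω, φ 0 ω ∂μ := by
    intro t
    induction t with
    | zero => simp
    | succ t ih =>
      calc ∫⁻ ω, φ (t + 1) ω ∂μ ≤ q * ∫⁻ ω, φ t ω ∂μ := hstep t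
        _ ≤ q * (q ^ t * ∫⁻ ω, φ 0 ω ∂μ) := by gcongr
        _ = q ^ (t + 1) * ∫⁻ ω, φ 0 ω ∂μ := by rw [pow_succ', mul_assoc]
  have hsum : ∫⁻ ω, ∑' t, φ t ω ∂μ ≠ ⊤ := by
    rw [lintegral_tsum fun t => (hφ t).aemeasurable]
    refine ne_top_of_le_ne_top ?_ (ENNReal.tsum_le_tsum hgeom)
    rw [ENNReal.tsum_mul_right, ENNReal.tsum_geometric]
    exact ENNReal.mul_ne_top (ENNReal.inv_ne_top.2 (tsub_pos_of_lt hq).ne') hφ0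
  filter_upwards [ae_lt_top (Measurable.tsum hφ) hsum] with ω hω
  exact ENNReal.tendsto_atTop_zero_of_tsum_ne_top hω.ne

lemma lintegral_comp_eq_sum {S : Type*} [Fintype S] [MeasurableSpace S]
    [MeasurableSingletonClass S] {I : Ω → S} (hI : Measurable I) (ψ : S → ENNReal) :
    ∫⁻ ω, ψ (I ω) ∂μ = ∑ i, ψ i * μ {ω | I ω = i} := by
  rw [← lintegral_map (measurable_of_finite ψ) hI, lintegral_fintype]
  simp only [Measure.map_apply hI (measurableSet_singleton _)]
  rfl

end Lintegral

section StochasticRecursion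

open MeasureTheory ProbabilityTheory Filter Topology

variable {Ω E S : Type*} [MeasurableSpace E] [mS : MeasurableSpace S]
  {U : E → S → E} {I : ℕ → Ω → S} {x0 : E} {X : ℕ → Ω → E}

lemma measurable_recursion_iSup_comap (hU : Measurable (Function.uncurry U))
    (hX0 : ∀ ω, X 0 ω = x0) (hXsucc : ∀ t ω, X (t + 1) ω = U (X t ω) (I (t + 1) ω)) (t : ℕ) :
    Measurable[⨆ k ∈ Set.Iic t, mS.comap (I k)] (X t) := by
  induction t with
  | zero =>
    rw [funext hX0]
    exact measurable_const
  | succ t ih =>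
    rw [funext (hXsucc t)]
    have hpast : (⨆ k ∈ Set.Iic t, mS.comap (I k)) ≤ ⨆ k ∈ Set.Iic (t + 1), mS.comap (I k) :=
      biSup_mono fun k hk => hk.trans t.le_succ
    have hnew : mS.comap (I (t + 1)) ≤ ⨆ k ∈ Set.Iic (t + 1), mS.comap (I k) :=
      le_biSup (fun k => mS.comap (I k)) (le_refl (t + 1))
    exact hU.comp ((ih.mono hpast le_rfl).prodMk
      ((comap_measurable (I (t + 1))).mono hnew le_rfl))

variable [MeasurableSpace Ω] {μ : Measure Ω}

lemma indepFun_recursion_succ (hU : Measurable (Function.uncurry U))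
    (hImeas : ∀ t, Measurable (I t)) (hIindep : iIndepFun I μ)
    (hX0 : ∀ ω, X 0 ω = x0) (hXsucc : ∀ t ω, X (t + 1) ω = U (X t ω) (I (t + 1) ω)) (t : ℕ) :
    IndepFun (X t) (I (t + 1)) μ := by
  have hdisj : Disjoint (Set.Iic t) {t + 1} := by simp
  have hindep := indep_iSup_of_disjoint (fun k => (hImeas k).comap_le) hIindep hdisj
  rw [iSup_singleton] at hindep
  exact indep_of_indep_of_le_left hindep
    (measurable_recursion_iSup_comap hU hX0 hXsucc t).comap_le

lemma measurable_recursion (hU : Measurable (Function.uncurry U))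
    (hImeas : ∀ t, Measurable (I t)) (hX0 : ∀ ω, X 0 ω = x0)
    (hXsucc : ∀ t ω, X (t + 1) ω = U (X t ω) (I (t + 1) ω)) (t : ℕ) : Measurable (X t) :=
  (measurable_recursion_iSup_comap hU hX0 hXsucc t).mono
    (iSup₂_le fun k _ => (hImeas k).comap_le) le_rfl

lemma lintegral_recursion_succ_le [IsProbabilityMeasure μ]
    (hU : Measurable (Function.uncurry U)) (hImeas : ∀ t, Measurable (I t))
    (hIindep : iIndepFun I μ) (hX0 : ∀ ω, X 0 ω = x0)
    (hXsucc : ∀ t ω, X (t + 1) ω = U (X t ω) (I (t + 1) ω))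
    {φ : E → ENNReal} (hφ : Measurable φ) {q : ENNReal} (t : ℕ)
    (hcontr : ∀ x, ∫⁻ ω, φ (U x (I (t + 1) ω)) ∂μ ≤ q * φ x) :
    ∫⁻ ω, φ (X (t + 1) ω) ∂μ ≤ q * ∫⁻ ω, φ (X t ω) ∂μ := by
  have hX := measurable_recursion hU hImeas hX0 hXsucc t
  have hprod : μ.map (fun ω => (X t ω, I (t + 1) ω)) = (μ.map (X t)).prod (μ.map (I (t + 1))) :=
    (indepFun_iff_map_prod_eq_prod_map_map hX.aemeasurable (hImeas _).aemeasurable).1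
      (indepFun_recursion_succ hU hImeas hIindep hX0 hXsucc t)
  have : IsProbabilityMeasure (μ.map (I (t + 1))) :=
    Measure.isProbabilityMeasure_map (hImeas _).aemeasurable
  have hφU : Measurable fun z : E × S => φ (U z.1 z.2) := hφ.comp hU
  calc ∫⁻ ω, φ (X (t + 1) ω) ∂μ
      = ∫⁻ z, φ (U z.1 z.2) ∂(μ.map fun ω => (X t ω, I (t + 1) ω)) := by
        rw [lintegral_map hφU (hX.prodMk (hImeas _))]
        simp only [hXsucc]
    _ = ∫⁻ x, ∫⁻ i, φ (U x i) ∂(μ.map (I (t + 1))) ∂(μ.map (X t)) := by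
        rw [hprod, lintegral_prod _ hφU.aemeasurable]
    _ = ∫⁻ x, ∫⁻ ω, φ (U x (I (t + 1) ω)) ∂μ ∂(μ.map (X t)) :=
        lintegral_congr fun x =>
          lintegral_map (hφU.comp measurable_prodMk_left) (hImeas _)
    _ ≤ ∫⁻ x, q * φ x ∂(μ.map (X t)) := lintegral_mono hcontr
    _ = q * ∫⁻ ω, φ (X t ω) ∂μ := by rw [lintegral_const_mul _ hφ, lintegral_map hφ hX]

theorem ae_tendsto_zero_of_sum_mul_le [Fintype S] [MeasurableSingletonClass S]
    [IsProbabilityMeasure μ] (hU : ∀ i, Measurable fun x => U x i)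
    (hImeas : ∀ t, Measurable (I t)) (hIindep : iIndepFun I μ) {p : S → ℝ}
    (hp : ∀ i, 0 ≤ p i) (hIdist : ∀ t i, μ {ω | I t ω = i} = ENNReal.ofReal (p i))
    (hX0 : ∀ ω, X 0 ω = x0) (hXsucc : ∀ t ω, X (t + 1) ω = U (X t ω) (I (t + 1) ω))
    {V : E → ℝ} (hV : Measurable V) (hV0 : ∀ x, 0 ≤ V x) {q : ℝ} (hq : q < 1)
    (hcontr : ∀ x, ∑ i, p i * V (U x i) ≤ q * V x) :
    ∀ᵐ ω ∂μ, Tendsto (fun t => V (X t ω)) atTop (𝓝 0) := by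
  have hU' : Measurable (Function.uncurry U) := measurable_from_prod_countable_left hU
  have hφ : Measurable fun x => ENNReal.ofReal (V x) := hV.ennreal_ofReal
  have hstep : ∀ t x, ∫⁻ ω, ENNReal.ofReal (V (U x (I (t + 1) ω))) ∂μ
      ≤ ENNReal.ofReal q * ENNReal.ofReal (V x) := fun t x =>
    calc ∫⁻ ω, ENNReal.ofReal (V (U x (I (t + 1) ω))) ∂μ
        = ∑ i, ENNReal.ofReal (V (U x i)) * ENNReal.ofReal (p i) := by
          rw [lintegral_comp_eq_sum (hImeas _) fun i => ENNReal.ofReal (V (U x i))]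
          simp only [hIdist]
      _ = ENNReal.ofReal (∑ i, p i * V (U x i)) := by
          rw [ENNReal.ofReal_sum_of_nonneg fun i _ => mul_nonneg (hp i) (hV0 _)]
          exact Finset.sum_congr rfl fun i _ => by rw [ENNReal.ofReal_mul (hp i), mul_comm]
      _ ≤ ENNReal.ofReal (q * V x) := ENNReal.ofReal_le_ofReal (hcontr x)
      _ = ENNReal.ofReal q * ENNReal.ofReal (V x) := ENNReal.ofReal_mul' (hV0 x)
  have hlim := ae_tendsto_zero_of_lintegral_succ_le_mul (μ := μ)
    (fun t => hφ.comp (measurable_recursion hU' hImeas hX0 hXsucc t))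
    (ENNReal.ofReal_lt_one.2 hq) (by simp [hX0]) fun t =>
      lintegral_recursion_succ_le hU' hImeas hIindep hX0 hXsucc hφ t (hstep t)
  filter_upwards [hlim] with ω hω
  simpa [Function.comp_def, ENNReal.toReal_ofReal (hV0 _)] using
    (ENNReal.tendsto_toReal ENNReal.zero_ne_top).comp hω

end StochasticRecursion

section CoordinateDescent

variable {ι : Type*} [Fintype ι]

lemma mulVec_dotProduct_mulVec_le {S : Matrix ι ι ℝ} (hS : S.IsSymm) {L : ℝ} (hL : 0 < L)
    (hS0 : ∀ v, 0 ≤ v ⬝ᵥ S *ᵥ v) (hSL : ∀ v, v ⬝ᵥ S *ᵥ v ≤ L * (v ⬝ᵥ v)) (g : ι → ℝ) :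
    S *ᵥ g ⬝ᵥ S *ᵥ g ≤ L * (g ⬝ᵥ S *ᵥ g) := by
  set v := S *ᵥ g with hv
  have hgv : g ⬝ᵥ S *ᵥ v = v ⬝ᵥ v := by
    rw [← dotProduct_transpose_mulVec, hS.eq]
  have hexp : (L • g - v) ⬝ᵥ S *ᵥ (L • g - v)
      = L ^ 2 * (g ⬝ᵥ v) - 2 * L * (v ⬝ᵥ v) + v ⬝ᵥ S *ᵥ v := by
    simp only [mulVec_sub, mulVec_smul, dotProduct_sub, sub_dotProduct, smul_dotProduct,
      dotProduct_smul, smul_eq_mul, ← hv, hgv]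
    ring
  have hnonneg : 0 ≤ L * (L * (g ⬝ᵥ v) - v ⬝ᵥ v) := by
    linarith [hS0 (L • g - v), hSL v]
  linarith [nonneg_of_mul_nonneg_right hnonneg hL]

lemma two_mul_mul_sub_le_dotProduct_self {F : (ι → ℝ) → ℝ} {g x : ι → ℝ} {c : ℝ} (hc : 0 ≤ c)
    (hF : ∀ h, F x + g ⬝ᵥ h + c / 2 * (h ⬝ᵥ h) ≤ F (x + h)) (y : ι → ℝ) :
    2 * c * (F x - F y) ≤ g ⬝ᵥ g := by
  have hFy := hF (y - x)
  rw [add_sub_cancel] at hFy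
  set h := y - x
  have hsq : 0 ≤ (g + c • h) ⬝ᵥ (g + c • h) := dotProduct_self_star_nonneg _
  simp only [add_dotProduct, dotProduct_add, smul_dotProduct, dotProduct_smul, smul_eq_mul,
    dotProduct_comm h g] at hsq
  linarith [mul_le_mul_of_nonneg_left hFy hc]

variable [DecidableEq ι] {F : (ι → ℝ) → ℝ} {g x p : ι → ℝ} {L pmin ε : ℝ}

lemma sum_mul_update_le (hL : 0 ≤ L)
    (hF : ∀ i t, F (Function.update x i (x i + t)) ≤ F x + t * g i + L / 2 * t ^ 2)
    (hpmin : 0 < pmin) (hp : ∀ i, pmin ≤ p i) (hpsum : ∑ i, p i = 1) (d : ι → ℝ) :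
    ∑ i, p i * F (Function.update x i (x i - ε / p i * d i))
      ≤ F x - ε * (g ⬝ᵥ d) + ε ^ 2 * L / (2 * pmin) * (d ⬝ᵥ d) := by
  have hcoord : ∀ i, p i * F (Function.update x i (x i - ε / p i * d i))
      ≤ p i * F x - ε * (g i * d i) + ε ^ 2 * L / (2 * pmin) * (d i * d i) := by
    intro i
    have hpi : 0 < p i := hpmin.trans_le (hp i)
    calc p i * F (Function.update x i (x i - ε / p i * d i))
        ≤ p i * (F x + -(ε / p i * d i) * g i + L / 2 * (-(ε / p i * d i)) ^ 2) := by
          rw [sub_eq_add_neg]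
          exact mul_le_mul_of_nonneg_left (hF i _) hpi.le
      _ = p i * F x - ε * (g i * d i) + ε ^ 2 * L / (2 * p i) * (d i * d i) := by
          field_simp
          ring
      _ ≤ p i * F x - ε * (g i * d i) + ε ^ 2 * L / (2 * pmin) * (d i * d i) := by
          gcongr
          · exact mul_self_nonneg _
          · exact hp i
  refine (Finset.sum_le_sum fun i _ => hcoord i).trans_eq ?_
  rw [Finset.sum_add_distrib, Finset.sum_sub_distrib, ← Finset.sum_mul, ← Finset.mul_sum,
    ← Finset.mul_sum, hpsum, one_mul]
  rfl

lemma sum_mul_update_mulVec_sub_le (hL : 0 ≤ L)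
    (hF : ∀ i t, F (Function.update x i (x i + t)) ≤ F x + t * g i + L / 2 * t ^ 2)
    (hpmin : 0 < pmin) (hp : ∀ i, pmin ≤ p i) (hpsum : ∑ i, p i = 1)
    {S : Matrix ι ι ℝ} (hS : S.IsSymm) {lam Lam : ℝ} (hlam : 0 ≤ lam) (hLam : 0 < Lam)
    (hSlam : ∀ v, lam * (v ⬝ᵥ v) ≤ v ⬝ᵥ S *ᵥ v) (hSLam : ∀ v, v ⬝ᵥ S *ᵥ v ≤ Lam * (v ⬝ᵥ v))
    {c Fmin : ℝ} (hg : 2 * c * (F x - Fmin) ≤ g ⬝ᵥ g)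
    (hε : 0 ≤ ε) (hεle : ε * (L * Lam) ≤ 2 * pmin) :
    ∑ i, p i * (F (Function.update x i (x i - ε / p i * (S *ᵥ g) i)) - Fmin)
      ≤ (1 - ε * (1 - ε * (L * Lam) / (2 * pmin)) * (lam * (2 * c))) * (F x - Fmin) := by
  set θ := ε * (L * Lam) / (2 * pmin) with hθ
  have hθ1 : 0 ≤ 1 - θ := sub_nonneg.2 ((div_le_one (by positivity)).2 hεle)
  have hdir : S *ᵥ g ⬝ᵥ S *ᵥ g ≤ Lam * (g ⬝ᵥ S *ᵥ g) :=
    mulVec_dotProduct_mulVec_le hS hLam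
      (fun v => (mul_nonneg hlam (dotProduct_self_star_nonneg v)).trans (hSlam v)) hSLam g
  have hdecr : lam * (2 * c * (F x - Fmin)) ≤ g ⬝ᵥ S *ᵥ g :=
    (mul_le_mul_of_nonneg_left hg hlam).trans (hSlam g)
  calc ∑ i, p i * (F (Function.update x i (x i - ε / p i * (S *ᵥ g) i)) - Fmin)
      = ∑ i, p i * F (Function.update x i (x i - ε / p i * (S *ᵥ g) i)) - Fmin := by
        simp only [mul_sub, Finset.sum_sub_distrib, ← Finset.sum_mul, hpsum, one_mul]
    _ ≤ F x - ε * (g ⬝ᵥ S *ᵥ g) + ε ^ 2 * L / (2 * pmin) * (S *ᵥ g ⬝ᵥ S *ᵥ g) - Fmin := by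
        gcongr
        exact sum_mul_update_le hL hF hpmin hp hpsum _
    _ ≤ F x - ε * (g ⬝ᵥ S *ᵥ g) + ε ^ 2 * L / (2 * pmin) * (Lam * (g ⬝ᵥ S *ᵥ g)) - Fmin := by
        gcongr
    _ = F x - Fmin - ε * (1 - θ) * (g ⬝ᵥ S *ᵥ g) := by
        rw [hθ]
        ring
    _ ≤ F x - Fmin - ε * (1 - θ) * (lam * (2 * c * (F x - Fmin))) := by gcongr
    _ = (1 - ε * (1 - θ) * (lam * (2 * c))) * (F x - Fmin) := by ring

end CoordinateDescent

lemma exists_eq_taylor_two {φ : ℝ → ℝ} (hφ : ContDiff ℝ 2 φ) (x h : ℝ) :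
    ∃ ξ, φ (x + h) = φ x + deriv φ x * h + deriv (deriv φ) ξ / 2 * h ^ 2 := by
  rcases eq_or_ne h 0 with rfl | hh
  · exact ⟨x, by simp⟩
  have hne : x ≠ x + h := by simpa using hh
  obtain ⟨ξ, -, hξ⟩ := taylor_mean_remainder_lagrange_iteratedDeriv (n := 1) hne hφ.contDiffOn
  have hderiv : derivWithin φ (Set.uIcc x (x + h)) x = deriv φ x :=
    (hφ.differentiable two_ne_zero x).derivWithin (uniqueDiffOn_uIcc hne x Set.left_mem_uIcc)
  refine ⟨ξ, ?_⟩
  simp only [taylorWithinEval_succ, taylor_within_zero_eval, zero_add, iteratedDerivWithin_one,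
    hderiv, iteratedDeriv_succ, iteratedDeriv_zero, Nat.factorial, smul_eq_mul,
    add_sub_cancel_left] at hξ
  push_cast at hξ
  linarith

section StochasticMatrix

variable {ι : Type*} [Fintype ι] {W : Matrix ι ι ℝ}

lemma sum_sum_mul_add_sq (hWsymm : W.IsSymm) (hWone : W *ᵥ 1 = 1) (z : ι → ℝ) (c : ℝ) :
    ∑ i, ∑ j, W i j * (z i + c * z j) ^ 2
      = (1 + c ^ 2) * (z ⬝ᵥ z) + 2 * c * (z ⬝ᵥ W *ᵥ z) := by
  have hrow : ∀ i, ∑ j, W i j = 1 := fun i => by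
    simpa [mulVec, dotProduct] using congrFun hWone i
  have hfst : ∑ i, ∑ j, W i j * z i ^ 2 = z ⬝ᵥ z := by
    simp only [← Finset.sum_mul, hrow, one_mul, dotProduct, sq]
  have hsnd : ∑ i, ∑ j, W i j * z j ^ 2 = z ⬝ᵥ z := by
    rw [Finset.sum_comm, ← hfst]
    simp only [hWsymm.apply]
  have hcross : ∑ i, ∑ j, W i j * (z i * z j) = z ⬝ᵥ W *ᵥ z := by
    simp only [mulVec, dotProduct, Finset.mul_sum, mul_left_comm]
  rw [← hcross, add_mul, one_mul, ← hfst]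
  nth_rewrite 2 [hfst]
  rw [← hsnd]
  simp only [Finset.mul_sum, ← Finset.sum_add_distrib]
  exact Finset.sum_congr rfl fun i _ => Finset.sum_congr rfl fun j _ => by ring

lemma dotProduct_mulVec_le_dotProduct_self (hWsymm : W.IsSymm) (hWnonneg : ∀ i j, 0 ≤ W i j)
    (hWone : W *ᵥ 1 = 1) (z : ι → ℝ) : z ⬝ᵥ W *ᵥ z ≤ z ⬝ᵥ z := by
  have hsum : 0 ≤ ∑ i, ∑ j, W i j * (z i + (-1) * z j) ^ 2 :=
    Finset.sum_nonneg fun i _ => Finset.sum_nonneg fun j _ =>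
      mul_nonneg (hWnonneg i j) (sq_nonneg _)
  rw [sum_sum_mul_add_sq hWsymm hWone] at hsum
  linarith

lemma two_mul_sum_diag_le (hWsymm : W.IsSymm) (hWnonneg : ∀ i j, 0 ≤ W i j)
    (hWone : W *ᵥ 1 = 1) (z : ι → ℝ) :
    2 * ∑ i, W i i * z i ^ 2 ≤ z ⬝ᵥ z + z ⬝ᵥ W *ᵥ z := by
  have hdiag : ∑ i, 4 * (W i i * z i ^ 2) ≤ ∑ i, ∑ j, W i j * (z i + 1 * z j) ^ 2 := by
    refine Finset.sum_le_sum fun i _ => ?_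
    calc 4 * (W i i * z i ^ 2) = W i i * (z i + 1 * z i) ^ 2 := by ring
      _ ≤ ∑ j, W i j * (z i + 1 * z j) ^ 2 :=
        Finset.single_le_sum (f := fun j => W i j * (z i + 1 * z j) ^ 2)
          (fun j _ => mul_nonneg (hWnonneg i j) (sq_nonneg _)) (Finset.mem_univ i)
  rw [sum_sum_mul_add_sq hWsymm hWone, ← Finset.mul_sum] at hdiag
  linarith

end StochasticMatrix

section Network

variable {n : ℕ} {W : Matrix (Fin n) (Fin n) ℝ} {f : Fin n → ℝ → ℝ} {α : ℝ}

lemma dotProduct_Bmat_mulVec (W : Matrix (Fin n) (Fin n) ℝ) (z : Fin n → ℝ) :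
    z ⬝ᵥ Bmat W *ᵥ z = z ⬝ᵥ z - 2 * ∑ i, W i i * z i ^ 2 + z ⬝ᵥ W *ᵥ z := by
  have hdiag : z ⬝ᵥ diagonal (fun i => W i i) *ᵥ z = ∑ i, W i i * z i ^ 2 := by
    simp only [dotProduct, mulVec_diagonal]
    exact Finset.sum_congr rfl fun i _ => by ring
  simp only [Bmat, add_mulVec, sub_mulVec, smul_mulVec, one_mulVec, dotProduct_add,
    dotProduct_sub, dotProduct_smul, smul_eq_mul, hdiag]

lemma dotProduct_Bmat_mulVec_nonneg (hWsymm : W.IsSymm) (hWnonneg : ∀ i j, 0 ≤ W i j)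
    (hWone : W *ᵥ 1 = 1) (z : Fin n → ℝ) : 0 ≤ z ⬝ᵥ Bmat W *ᵥ z := by
  rw [dotProduct_Bmat_mulVec]
  linarith [two_mul_sum_diag_le hWsymm hWnonneg hWone z]

lemma dotProduct_Bmat_mulVec_le (hWsymm : W.IsSymm) (hWnonneg : ∀ i j, 0 ≤ W i j)
    (hWone : W *ᵥ 1 = 1) (z : Fin n → ℝ) :
    z ⬝ᵥ Bmat W *ᵥ z ≤ ∑ i, 2 * (1 - W i i) * z i ^ 2 := by
  have hsum : ∑ i, 2 * (1 - W i i) * z i ^ 2 = 2 * (z ⬝ᵥ z) - 2 * ∑ i, W i i * z i ^ 2 := by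
    simp only [dotProduct, Finset.mul_sum, ← Finset.sum_sub_distrib]
    exact Finset.sum_congr rfl fun i _ => by ring
  rw [dotProduct_Bmat_mulVec, hsum]
  linarith [dotProduct_mulVec_le_dotProduct_self hWsymm hWnonneg hWone z]

lemma Hhatinv_isSymm (hWsymm : W.IsSymm) (x : Fin n → ℝ) : (Hhatinv W f α x).IsSymm := by
  simp [IsSymm, Hhatinv, Dinvhalf, Bmat, hWsymm.eq, Matrix.mul_assoc]

lemma Hhatinv_eq {x : Fin n → ℝ} (hD : ∀ i, 0 ≤ dEntry W f α x i) :
    Hhatinv W f α x = diagonal (dEntry W f α x)⁻¹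
      + diagonal (dEntry W f α x)⁻¹ * Bmat W * diagonal (dEntry W f α x)⁻¹ := by
  have hsq : Dinvhalf W f α x * Dinvhalf W f α x = diagonal (dEntry W f α x)⁻¹ := by
    rw [Dinvhalf, diagonal_mul_diagonal]
    congr 1
    ext i
    rw [Pi.inv_apply, ← mul_inv, Real.mul_self_sqrt (hD i)]
  rw [← hsq, Hhatinv]
  noncomm_ring

lemma dotProduct_Hhatinv_mulVec {x : Fin n → ℝ} (hD : ∀ i, 0 ≤ dEntry W f α x i)
    (v : Fin n → ℝ) :
    v ⬝ᵥ Hhatinv W f α x *ᵥ v = ∑ i, (dEntry W f α x i)⁻¹ * v i ^ 2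
      + ((dEntry W f α x)⁻¹ * v) ⬝ᵥ Bmat W *ᵥ ((dEntry W f α x)⁻¹ * v) := by
  have hmul : ∀ d u : Fin n → ℝ, diagonal d *ᵥ u = d * u := fun d u =>
    funext fun i => mulVec_diagonal d u i
  have hdot : ∀ d u w : Fin n → ℝ, u ⬝ᵥ (d * w) = (d * u) ⬝ᵥ w := fun d u w =>
    Finset.sum_congr rfl fun i _ => by simp only [Pi.mul_apply]; ring
  rw [Hhatinv_eq hD, add_mulVec, dotProduct_add, ← mulVec_mulVec, ← mulVec_mulVec, hmul, hmul,
    hdot _ v (Bmat W *ᵥ _)]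
  congr 1
  exact Finset.sum_congr rfl fun i _ => by simp only [Pi.mul_apply, Pi.inv_apply]; ring

lemma inv_mul_dotProduct_le_dotProduct_Hhatinv_mulVec (hWsymm : W.IsSymm)
    (hWnonneg : ∀ i j, 0 ≤ W i j) (hWone : W *ᵥ 1 = 1) {x : Fin n → ℝ}
    (hD : ∀ i, 0 < dEntry W f α x i) {K : ℝ} (hK : ∀ i, dEntry W f α x i ≤ K) (v : Fin n → ℝ) :
    K⁻¹ * (v ⬝ᵥ v) ≤ v ⬝ᵥ Hhatinv W f α x *ᵥ v := by
  have hdiag : K⁻¹ * (v ⬝ᵥ v) ≤ ∑ i, (dEntry W f α x i)⁻¹ * v i ^ 2 := by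
    rw [dotProduct, Finset.mul_sum]
    refine Finset.sum_le_sum fun i _ => ?_
    rw [← sq]
    exact mul_le_mul_of_nonneg_right (inv_anti₀ (hD i) (hK i)) (sq_nonneg _)
  rw [dotProduct_Hhatinv_mulVec fun i => (hD i).le]
  linarith [dotProduct_Bmat_mulVec_nonneg hWsymm hWnonneg hWone ((dEntry W f α x)⁻¹ * v)]

lemma dotProduct_Hhatinv_mulVec_le_div_mul (hWsymm : W.IsSymm) (hWnonneg : ∀ i j, 0 ≤ W i j)
    (hWone : W *ᵥ 1 = 1) {x : Fin n → ℝ} {k ρ : ℝ} (hk : 0 < k)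
    (hkD : ∀ i, k ≤ dEntry W f α x i) (hρ : 0 ≤ ρ)
    (hρD : ∀ i, 2 * (1 - W i i) ≤ ρ * dEntry W f α x i) (v : Fin n → ℝ) :
    v ⬝ᵥ Hhatinv W f α x *ᵥ v ≤ (1 + ρ) / k * (v ⬝ᵥ v) := by
  have hD : ∀ i, 0 < dEntry W f α x i := fun i => hk.trans_le (hkD i)
  rw [dotProduct_Hhatinv_mulVec fun i => (hD i).le]
  set d := dEntry W f α x
  have hB : (d⁻¹ * v) ⬝ᵥ Bmat W *ᵥ (d⁻¹ * v) ≤ ∑ i, ρ * ((d i)⁻¹ * v i ^ 2) := by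
    refine (dotProduct_Bmat_mulVec_le hWsymm hWnonneg hWone _).trans
      (Finset.sum_le_sum fun i _ => ?_)
    calc 2 * (1 - W i i) * (d⁻¹ * v) i ^ 2 ≤ ρ * d i * (d⁻¹ * v) i ^ 2 :=
          mul_le_mul_of_nonneg_right (hρD i) (sq_nonneg _)
      _ = ρ * ((d i)⁻¹ * v i ^ 2) := by
          have := (hD i).ne'
          simp only [Pi.mul_apply, Pi.inv_apply]
          field_simp
  calc ∑ i, (d i)⁻¹ * v i ^ 2 + (d⁻¹ * v) ⬝ᵥ Bmat W *ᵥ (d⁻¹ * v)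
      ≤ ∑ i, (d i)⁻¹ * v i ^ 2 + ∑ i, ρ * ((d i)⁻¹ * v i ^ 2) := by gcongr
    _ = ∑ i, (1 + ρ) * ((d i)⁻¹ * v i ^ 2) := by
        rw [← Finset.mul_sum, ← Finset.mul_sum]
        ring
    _ ≤ ∑ i, (1 + ρ) * (k⁻¹ * v i ^ 2) := by
        gcongr with i
        exact hkD i
    _ = (1 + ρ) / k * (v ⬝ᵥ v) := by
        simp only [dotProduct, Finset.mul_sum]
        exact Finset.sum_congr rfl fun i _ => by ring

lemma Fobj_add (hWsymm : W.IsSymm) (x h : Fin n → ℝ) :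
    Fobj W f α (x + h) = Fobj W f α x + gvec W f α x ⬝ᵥ h + 1 / 2 * (h ⬝ᵥ (1 - W) *ᵥ h)
      + α * ∑ i, (f i (x i + h i) - f i (x i) - deriv (f i) (x i) * h i) := by
  have hsymm : x ⬝ᵥ (1 - W) *ᵥ h = h ⬝ᵥ (1 - W) *ᵥ x := by
    rw [← dotProduct_transpose_mulVec, transpose_sub, transpose_one, hWsymm.eq]
  have hgrad : gvec W f α x ⬝ᵥ h
      = h ⬝ᵥ (1 - W) *ᵥ x + α * ∑ i, deriv (f i) (x i) * h i := by
    simp only [gvec, dotProduct, Finset.mul_sum, ← Finset.sum_add_distrib]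
    exact Finset.sum_congr rfl fun i _ => by ring
  simp only [hgrad, Fobj, mulVec_add, dotProduct_add, add_dotProduct, hsymm, Pi.add_apply,
    Finset.sum_sub_distrib]
  ring

lemma le_Fobj_add (hWsymm : W.IsSymm) (hWnonneg : ∀ i j, 0 ≤ W i j) (hWone : W *ᵥ 1 = 1)
    (hf : ∀ i, ContDiff ℝ 2 (f i)) {m : ℝ} (hm : ∀ i s, m ≤ d2 f i s) (hα : 0 ≤ α)
    (x h : Fin n → ℝ) :
    Fobj W f α x + gvec W f α x ⬝ᵥ h + α * m / 2 * (h ⬝ᵥ h) ≤ Fobj W f α (x + h) := by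
  have hquad : 0 ≤ h ⬝ᵥ (1 - W) *ᵥ h := by
    rw [sub_mulVec, one_mulVec, dotProduct_sub]
    exact sub_nonneg.2 (dotProduct_mulVec_le_dotProduct_self hWsymm hWnonneg hWone h)
  have hlocal : m / 2 * (h ⬝ᵥ h)
      ≤ ∑ i, (f i (x i + h i) - f i (x i) - deriv (f i) (x i) * h i) := by
    rw [dotProduct, Finset.mul_sum]
    refine Finset.sum_le_sum fun i _ => ?_
    obtain ⟨ξ, hξ⟩ := exists_eq_taylor_two (hf i) (x i) (h i)
    have hmul : m * h i ^ 2 ≤ deriv (deriv (f i)) ξ * h i ^ 2 :=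
      mul_le_mul_of_nonneg_right (hm i ξ) (sq_nonneg _)
    linarith
  rw [Fobj_add hWsymm]
  linarith [mul_le_mul_of_nonneg_left hlocal hα]

lemma Fobj_update_le (hWsymm : W.IsSymm) (hf : ∀ i, ContDiff ℝ 2 (f i)) {M : ℝ}
    (hM : ∀ i s, d2 f i s ≤ M) (hα : 0 ≤ α) (x : Fin n → ℝ) (i : Fin n) (t : ℝ) :
    Fobj W f α (Function.update x i (x i + t))
      ≤ Fobj W f α x + t * gvec W f α x i + (1 - W i i + α * M) / 2 * t ^ 2 := by
  have hupdate : Function.update x i (x i + t) = x + Pi.single i t := by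
    ext j
    rcases eq_or_ne j i with rfl | hj <;> simp [*]
  have hlocal : ∑ j, (f j (x j + (Pi.single i t : Fin n → ℝ) j) - f j (x j)
      - deriv (f j) (x j) * (Pi.single i t : Fin n → ℝ) j)
      = f i (x i + t) - f i (x i) - deriv (f i) (x i) * t := by
    rw [Finset.sum_eq_single i (fun j _ hj => by simp [hj]) (by simp), Pi.single_eq_same]
  have hquad : (Pi.single i t : Fin n → ℝ) ⬝ᵥ (1 - W) *ᵥ Pi.single i t = (1 - W i i) * t ^ 2 := by
    simp only [single_dotProduct, mulVec_single, op_smul_eq_smul, Pi.smul_apply, col_apply,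
      Matrix.sub_apply, one_apply_eq, smul_eq_mul]
    ring
  obtain ⟨ξ, hξ⟩ := exists_eq_taylor_two (hf i) (x i) t
  have hcurv : α * (deriv (deriv (f i)) ξ * t ^ 2) ≤ α * (M * t ^ 2) := by
    gcongr
    exact hM i ξ
  rw [hupdate, Fobj_add hWsymm, hlocal, hquad, dotProduct_single, hξ]
  linarith

lemma exists_sum_mul_Fobj_upd_sub_le (hWsymm : W.IsSymm) (hWnonneg : ∀ i j, 0 ≤ W i j)
    (hWone : W *ᵥ 1 = 1) (hf : ∀ i, ContDiff ℝ 2 (f i)) {m M : ℝ} (hm : 0 < m)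
    (hd2 : ∀ i s, m ≤ d2 f i s ∧ d2 f i s ≤ M) (hα : 0 < α) {L k K ρ : ℝ} (hL : 0 ≤ L)
    (hLW : ∀ i, 1 - W i i + α * M ≤ L) (hk : 0 < k) (hkD : ∀ x i, k ≤ dEntry W f α x i)
    (hK : 0 < K) (hDK : ∀ x i, dEntry W f α x i ≤ K) (hρ : 0 ≤ ρ)
    (hρD : ∀ x i, 2 * (1 - W i i) ≤ ρ * dEntry W f α x i) {p : Fin n → ℝ} {pmin ε : ℝ}
    (hpmin : 0 < pmin) (hp : ∀ i, pmin ≤ p i) (hpsum : ∑ i, p i = 1) (hε : 0 < ε)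
    (hεlt : ε * (L * ((1 + ρ) / k)) < 2 * pmin) :
    ∃ q < 1, ∀ x y, ∑ i, p i * (Fobj W f α (upd W f α p ε x i) - Fobj W f α y)
      ≤ q * (Fobj W f α x - Fobj W f α y) := by
  have hgap : 0 < 1 - ε * (L * ((1 + ρ) / k)) / (2 * pmin) :=
    sub_pos.2 ((div_lt_one (by positivity)).2 hεlt)
  refine ⟨1 - ε * (1 - ε * (L * ((1 + ρ) / k)) / (2 * pmin)) * (K⁻¹ * (2 * (α * m))),
    sub_lt_self _ (by positivity), fun x y => ?_⟩
  have hdescent : ∀ i t, Fobj W f α (Function.update x i (x i + t))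
      ≤ Fobj W f α x + t * gvec W f α x i + L / 2 * t ^ 2 := fun i t =>
    (Fobj_update_le hWsymm hf (fun j s => (hd2 j s).2) hα.le x i t).trans (by gcongr; exact hLW i)
  have hgrad : 2 * (α * m) * (Fobj W f α x - Fobj W f α y)
      ≤ gvec W f α x ⬝ᵥ gvec W f α x :=
    two_mul_mul_sub_le_dotProduct_self (mul_pos hα hm).le
      (le_Fobj_add hWsymm hWnonneg hWone hf (fun i s => (hd2 i s).1) hα.le x) y
  exact sum_mul_update_mulVec_sub_le hL hdescent hpmin hp hpsum (Hhatinv_isSymm hWsymm x)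
    (inv_nonneg.2 hK.le) (by positivity)
    (inv_mul_dotProduct_le_dotProduct_Hhatinv_mulVec hWsymm hWnonneg hWone
      (fun i => hk.trans_le (hkD x i)) (hDK x))
    (dotProduct_Hhatinv_mulVec_le_div_mul hWsymm hWnonneg hWone hk (hkD x) hρ (hρD x)) hgrad
    hε.le hεlt.le

lemma two_mul_one_sub_le_div_mul_dEntry {δ : ℝ} {i : Fin n} (hδ : δ ≤ W i i) (hW : W i i ≤ 1)
    {m : ℝ} (hm : ∀ s, m ≤ d2 f i s) (hαm : 0 < α * m) (hα : 0 ≤ α) (x : Fin n → ℝ) :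
    2 * (1 - W i i) ≤ 2 * (1 - δ) / (2 * (1 - δ) + α * m) * dEntry W f α x i := by
  have hden : 0 < 2 * (1 - δ) + α * m := by linarith
  have hcurv : α * m ≤ α * d2 f i (x i) := mul_le_mul_of_nonneg_left (hm _) hα
  rw [div_mul_eq_mul_div, le_div_iff₀ hden, dEntry]
  nlinarith

lemma measurable_Fobj (W : Matrix (Fin n) (Fin n) ℝ) (hf : ∀ i, Continuous (f i)) (α : ℝ) :
    Measurable (Fobj W f α) := by
  refine Continuous.measurable ?_
  unfold Fobj
  fun_prop

lemma measurable_dEntry (W : Matrix (Fin n) (Fin n) ℝ) (f : Fin n → ℝ → ℝ) (α : ℝ) (i : Fin n) :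
    Measurable fun x => dEntry W f α x i :=
  (((measurable_deriv (deriv (f i))).comp (measurable_pi_apply i)).const_mul α).add_const _

lemma measurable_upd (W : Matrix (Fin n) (Fin n) ℝ) (f : Fin n → ℝ → ℝ) (α : ℝ)
    (p : Fin n → ℝ) (ε : ℝ) (i : Fin n) : Measurable fun x => upd W f α p ε x i := by
  have hsqrt : ∀ j, Measurable fun x => (Real.sqrt (dEntry W f α x j))⁻¹ := fun j =>
    (measurable_dEntry W f α j).sqrt.inv
  have hS : ∀ j k, Measurable fun x => Hhatinv W f α x j k := by
    intro j k
    simp only [Hhatinv, Dinvhalf, mul_diagonal, diagonal_mul, Matrix.add_apply]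
    exact ((hsqrt j).mul ((((hsqrt j).mul_const _).mul (hsqrt k)).const_add _)).mul (hsqrt k)
  have hg : ∀ j, Measurable fun x => gvec W f α x j := by
    intro j
    simp only [gvec, mulVec, dotProduct]
    have := measurable_deriv (f j)
    fun_prop
  refine measurable_pi_lambda _ fun j => ?_
  rcases eq_or_ne j i with rfl | hj
  · simp only [upd, Function.update_self, mulVec, dotProduct]
    fun_prop
  · simp only [upd, Function.update_of_ne hj]
    fun_prop

end Network

lemma stepsize_mul_lt {m M α δ Δ pmin ρ lam Lam ε : ℝ} (hm : 0 < m) (hmM : m ≤ M) (hα : 0 < α)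
    (hδΔ : δ ≤ Δ) (hΔ : Δ < 1) (hpmin : 0 < pmin)
    (hρ : ρ = 2 * (1 - δ) / (2 * (1 - δ) + α * m)) (hlam : lam = 1 / (2 * (1 - δ) + α * M))
    (hLam : Lam = (1 + ρ) / (2 * (1 - Δ) + α * m)) (hεle : ε ≤ 2 * pmin * (lam / Lam) ^ 2) :
    ε * ((1 - δ + α * M) * Lam) < 2 * pmin := by
  have hαm : 0 < α * m := mul_pos hα hm
  have hαM : α * m ≤ α * M := mul_le_mul_of_nonneg_left hmM hα.le
  have hρ0 : 0 ≤ ρ := hρ ▸ div_nonneg (by linarith) (by linarith)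
  have hL : 0 < 1 - δ + α * M := by linarith
  have hlam0 : 0 < lam := hlam ▸ one_div_pos.2 (by linarith)
  have hlamLam : lam ≤ Lam := by
    rw [hlam, hLam]
    exact div_le_div₀ (by linarith) (by linarith) (by linarith) (by linarith)
  have hLam0 : 0 < Lam := hlam0.trans_le hlamLam
  have hLlam : (1 - δ + α * M) * lam < 1 := by
    rw [hlam, mul_one_div, div_lt_one (by linarith)]
    linarith
  calc ε * ((1 - δ + α * M) * Lam)
      ≤ 2 * pmin * (lam / Lam) ^ 2 * ((1 - δ + α * M) * Lam) := by gcongr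
    _ = 2 * pmin * ((1 - δ + α * M) * lam) * (lam / Lam) := by field_simp
    _ ≤ 2 * pmin * ((1 - δ + α * M) * lam) * 1 := by
        gcongr
        exact (div_le_one hLam0).2 hlamLam
    _ < 2 * pmin := by
        rw [mul_one]
        exact mul_lt_of_lt_one_right (by positivity) hLlam

theorem stmt6_general {n : ℕ} {W : Matrix (Fin n) (Fin n) ℝ} (hWsymm : W.IsSymm)
    (hWnonneg : ∀ i j, 0 ≤ W i j) (hWone : W *ᵥ 1 = 1) {δ Δ : ℝ} (hΔ : Δ ≤ 1)
    (hWdiag : ∀ i, δ ≤ W i i ∧ W i i ≤ Δ) {f : Fin n → ℝ → ℝ} (hf : ∀ i, ContDiff ℝ 2 (f i))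
    {m M : ℝ} (hm : 0 < m) (hd2 : ∀ i s, m ≤ d2 f i s ∧ d2 f i s ≤ M) {α : ℝ} (hα : 0 < α)
    {p : Fin n → ℝ} {pmin : ℝ} (hpmin : 0 < pmin) (hp : ∀ i, pmin ≤ p i) (hpsum : ∑ i, p i = 1)
    {xstar : Fin n → ℝ} (hmin : ∀ y, Fobj W f α xstar ≤ Fobj W f α y) {ρ Lam : ℝ}
    (hρ : ρ = 2 * (1 - δ) / (2 * (1 - δ) + α * m))
    (hLam : Lam = (1 + ρ) / (2 * (1 - Δ) + α * m)) {ε : ℝ} (hε : 0 < ε)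
    (hεlt : ε * ((1 - δ + α * M) * Lam) < 2 * pmin)
    {Ω : Type*} [MeasurableSpace Ω] {μ : MeasureTheory.Measure Ω}
    [MeasureTheory.IsProbabilityMeasure μ] {I : ℕ → Ω → Fin n} (hImeas : ∀ t, Measurable (I t))
    (hIindep : ProbabilityTheory.iIndepFun I μ)
    (hIdist : ∀ t i, μ {ω | I t ω = i} = ENNReal.ofReal (p i)) {x0 : Fin n → ℝ}
    {X : ℕ → Ω → Fin n → ℝ} (hX0 : ∀ ω, X 0 ω = x0)
    (hXsucc : ∀ t ω, X (t + 1) ω = upd W f α p ε (X t ω) (I (t + 1) ω)) :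
    ∀ᵐ ω ∂μ, Filter.Tendsto (fun t => Fobj W f α (X t ω)) Filter.atTop
      (nhds (Fobj W f α xstar)) := by
  obtain ⟨i₀, -⟩ := Finset.nonempty_of_sum_ne_zero (hpsum.trans_ne one_ne_zero)
  have hδΔ : δ ≤ Δ := (hWdiag i₀).1.trans (hWdiag i₀).2
  have hαm : 0 < α * m := mul_pos hα hm
  have hαd2 : ∀ i s, α * m ≤ α * d2 f i s ∧ α * d2 f i s ≤ α * M := fun i s =>
    ⟨mul_le_mul_of_nonneg_left (hd2 i s).1 hα.le, mul_le_mul_of_nonneg_left (hd2 i s).2 hα.le⟩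
  have hαM : α * m ≤ α * M := (hαd2 i₀ 0).1.trans (hαd2 i₀ 0).2
  subst hρ hLam
  obtain ⟨q, hq, hcontr⟩ := exists_sum_mul_Fobj_upd_sub_le hWsymm hWnonneg hWone hf hm hd2 hα
    (L := 1 - δ + α * M) (k := 2 * (1 - Δ) + α * m) (K := 2 * (1 - δ) + α * M) (by linarith)
    (fun i => by linarith [hWdiag i]) (by linarith)
    (fun x i => by rw [dEntry]; linarith [hWdiag i, hαd2 i (x i)]) (by linarith)
    (fun x i => by rw [dEntry]; linarith [hWdiag i, hαd2 i (x i)])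
    (div_nonneg (by linarith) (by linarith))
    (fun x i => two_mul_one_sub_le_div_mul_dEntry (hWdiag i).1 ((hWdiag i).2.trans hΔ)
      (fun s => (hd2 i s).1) hαm hα.le x) hpmin hp hpsum hε hεlt
  have hlim := ae_tendsto_zero_of_sum_mul_le (measurable_upd W f α p ε) hImeas hIindep
    (fun i => hpmin.le.trans (hp i)) hIdist hX0 hXsucc
    ((measurable_Fobj W (fun i => (hf i).continuous) α).sub_const (Fobj W f α xstar))
    (fun y => sub_nonneg.2 (hmin y)) hq fun x => hcontr x xstar
  filter_upwards [hlim] with ω hω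
  simpa using hω.add_const (Fobj W f α xstar)

/-- Almost sure convergence of the function values of the asynchronous network
Newton iterates to the optimal value `F*`, for `0 < ε ≤ 2π(λ/Λ)²`. -/
theorem stmt6 (n : ℕ) (hn : 1 ≤ n)
    (W : Matrix (Fin n) (Fin n) ℝ) (hWsymm : W.IsSymm)
    (hWnonneg : ∀ i j, 0 ≤ W i j) (hWlt : ∀ i j, W i j < 1)
    (hWone : W.mulVec (fun _ => 1) = fun _ => 1)
    (hWnull : ∀ x : Fin n → ℝ, ((1 - W).mulVec x = 0 ↔ ∃ c : ℝ, x = fun _ => c))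
    (δ Δ : ℝ) (hδ : 0 < δ) (hδΔ : δ ≤ Δ) (hΔ : Δ < 1)
    (hWdiag : ∀ i, δ ≤ W i i ∧ W i i ≤ Δ)
    (f : Fin n → ℝ → ℝ) (hf : ∀ i, ContDiff ℝ 2 (f i))
    (hconv : ∀ i, ConvexOn ℝ Set.univ (f i))
    (m M : ℝ) (hm : 0 < m) (hmM : m ≤ M)
    (hd2 : ∀ i s, m ≤ d2 f i s ∧ d2 f i s ≤ M)
    (α : ℝ) (hα : 0 < α)
    (p : Fin n → ℝ) (pmin pmax : ℝ) (hpmin : 0 < pmin) (hpmax : pmax < 1)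
    (hp : ∀ i, pmin ≤ p i ∧ p i ≤ pmax) (hpsum : ∑ i, p i = 1)
    (xstar : Fin n → ℝ) (hmin : ∀ y, Fobj W f α xstar ≤ Fobj W f α y)
    (ρ lam Lam : ℝ) (hρ : ρ = 2 * (1 - δ) / (2 * (1 - δ) + α * m))
    (hlam : lam = 1 / (2 * (1 - δ) + α * M))
    (hLam : Lam = (1 + ρ) / (2 * (1 - Δ) + α * m))
    (ε : ℝ) (hε : 0 < ε) (hεle : ε ≤ 2 * pmin * (lam / Lam) ^ 2)
    (Ω : Type*) [MeasurableSpace Ω] (μ : MeasureTheory.Measure Ω)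
    [MeasureTheory.IsProbabilityMeasure μ]
    (I : ℕ → Ω → Fin n) (hImeas : ∀ t, Measurable (I t))
    (hIindep : ProbabilityTheory.iIndepFun I μ)
    (hIdist : ∀ t i, μ {ω | I t ω = i} = ENNReal.ofReal (p i))
    (x0 : Fin n → ℝ) (X : ℕ → Ω → Fin n → ℝ)
    (hX0 : ∀ ω, X 0 ω = x0)
    (hXsucc : ∀ (t : ℕ) (ω : Ω), X (t + 1) ω = upd W f α p ε (X t ω) (I (t + 1) ω))
    : ∀ᵐ ω ∂μ,
      Filter.Tendsto (fun t => Fobj W f α (X t ω)) Filter.atTop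
        (nhds (Fobj W f α xstar)) := by
  exact stmt6_general hWsymm hWnonneg hWone hΔ.le hWdiag hf hm hd2 hα hpmin (fun i => (hp i).1)
    hpsum hmin hρ hLam hε (stepsize_mul_lt hm hmM hα hδΔ hΔ hpmin hρ hlam hLam hεle) hImeas
    hIindep hIdist hX0 hXsucc
end
end
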